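/- Let n ≥ 1 and let d be a divisor of n. Then the row sum a_d(n) := ∑_{k|n} c_d(k) is a nonnegative real number; moreover a_d(n) = 0 if and only if n is even and n/d is odd. -/

import Mathlib

/-- The Ramanujan sum `c_d(r)`: the sum of the `r`-th powers of all primitive
`d`-th roots of unity. -/
noncomputable def ramanujanSum (d r : ℕ) : ℂ :=
  ∑ m ∈ (Finset.range d).filter (fun m => Nat.gcd m d = 1),
    Complex.exp (2 * Real.pi * Complex.I * ((m : ℂ) * (r : ℂ) / (d : ℂ)))

lemma ram_term (d m r : ℕ) :
    Complex.exp (2 * Real.pi * Complex.I * ((m : ℂ) * (r : ℂ) / (d : ℂ))) =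
      (Complex.exp (2 * Real.pi * Complex.I / d) ^ m) ^ r := by
  rw [← Complex.exp_nat_mul, ← Complex.exp_nat_mul]
  congr 1
  ring

lemma ram_eq (d r : ℕ) (hd : 0 < d) :
    ramanujanSum d r = ∑ z ∈ primitiveRoots d ℂ, z ^ r := by
  have hz := Complex.isPrimitiveRoot_exp d hd.ne'
  haveI : NeZero d := ⟨hd.ne'⟩
  unfold ramanujanSum
  refine Finset.sum_bij (fun m _ => Complex.exp (2 * Real.pi * Complex.I / d) ^ m) ?_ ?_ ?_ ?_
  · intro m hm
    simp only [Finset.mem_filter, Finset.mem_range] at hm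
    rw [mem_primitiveRoots hd]
    exact hz.pow_of_coprime m hm.2
  · intro a ha b hb h
    simp only [Finset.mem_filter, Finset.mem_range] at ha hb
    exact hz.pow_inj ha.1 hb.1 h
  · intro b hb
    rw [mem_primitiveRoots hd] at hb
    obtain ⟨i, hi, hc, h⟩ := hz.isPrimitiveRoot_iff.mp hb
    exact ⟨i, by simp only [Finset.mem_filter, Finset.mem_range]; exact ⟨hi, hc⟩, h⟩
  · intro m _
    exact ram_term d m r

lemma sum_roots (d r : ℕ) (hd : 0 < d) :
    ∑ z ∈ Polynomial.nthRootsFinset d (1 : ℂ), z ^ r = if d ∣ r then (d : ℂ) else 0 := by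
  have hz := Complex.isPrimitiveRoot_exp d hd.ne'
  haveI : NeZero d := ⟨hd.ne'⟩
  set ζ := Complex.exp (2 * Real.pi * Complex.I / d) with hζ
  split_ifs with h
  · have : ∀ z ∈ Polynomial.nthRootsFinset d (1 : ℂ), z ^ r = 1 := by
      intro z hz'
      rw [Polynomial.mem_nthRootsFinset hd] at hz'
      obtain ⟨c, rfl⟩ := h
      rw [pow_mul, hz', one_pow]
    rw [Finset.sum_congr rfl this]
    simp [hz.card_nthRootsFinset]
  · have h1 : ζ ^ r ≠ 1 := fun h' => h ((hz.pow_eq_one_iff_dvd r).1 h')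
    have h2 : ζ ^ r * ∑ z ∈ Polynomial.nthRootsFinset d (1 : ℂ), z ^ r
        = ∑ z ∈ Polynomial.nthRootsFinset d (1 : ℂ), z ^ r := by
      rw [Finset.mul_sum]
      have hζ0 : ζ ≠ 0 := Complex.exp_ne_zero _
      refine Finset.sum_bij (fun z _ => ζ * z) ?_ ?_ ?_ ?_
      · intro z hz'
        rw [Polynomial.mem_nthRootsFinset hd] at hz' ⊢
        rw [mul_pow, hz', hz.pow_eq_one, one_mul]
      · intro a _ b _ hab
        exact mul_left_cancel₀ hζ0 hab
      · intro b hb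
        refine ⟨ζ⁻¹ * b, ?_, by field_simp⟩
        rw [Polynomial.mem_nthRootsFinset hd] at hb ⊢
        rw [mul_pow, hb, inv_pow, hz.pow_eq_one, inv_one, one_mul]
      · intro z _
        rw [mul_pow]
    have h3 : (ζ ^ r - 1) * ∑ z ∈ Polynomial.nthRootsFinset d (1 : ℂ), z ^ r = 0 := by
      rw [sub_mul, h2, one_mul, sub_self]
    exact (mul_eq_zero.1 h3).resolve_left (sub_ne_zero.2 h1)

lemma sum_ram (d r : ℕ) (hd : 0 < d) :
    ∑ e ∈ d.divisors, ramanujanSum e r = if d ∣ r then (d : ℂ) else 0 := by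
  rw [← sum_roots d r hd, IsPrimitiveRoot.nthRoots_one_eq_biUnion_primitiveRoots,
    Finset.sum_biUnion]
  · exact Finset.sum_congr rfl fun e he => ram_eq e r (Nat.pos_of_mem_divisors he)
  · intro a _ b _ hab
    exact IsPrimitiveRoot.disjoint hab

/-- The integer form of the row sum. -/
def rowA (n d : ℕ) : ℤ :=
  ∑ e ∈ d.divisors, ArithmeticFunction.moebius (d / e) * (e * ((n / e).divisors.card : ℤ))

lemma card_mult (n d : ℕ) (hn : n ≠ 0) (hd : d ∣ n) :
    (n.divisors.filter (fun k => d ∣ k)).card = (n / d).divisors.card := by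
  obtain ⟨m, rfl⟩ := hd
  have hd0 : 0 < d := Nat.pos_of_ne_zero (left_ne_zero_of_mul hn)
  rw [Nat.mul_div_cancel_left _ hd0]
  symm
  refine Finset.card_bij (fun k _ => d * k) ?_ ?_ ?_
  · intro k hk
    simp only [Finset.mem_filter, Nat.mem_divisors] at hk ⊢
    exact ⟨⟨mul_dvd_mul_left d hk.1, hn⟩, dvd_mul_right _ _⟩
  · intro a _ b _ h
    exact Nat.eq_of_mul_eq_mul_left hd0 h
  · intro b hb
    simp only [Finset.mem_filter, Nat.mem_divisors] at hb
    obtain ⟨⟨h1, _⟩, c, rfl⟩ := hb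
    refine ⟨c, ?_, rfl⟩
    rw [Nat.mem_divisors]
    exact ⟨Nat.dvd_of_mul_dvd_mul_left hd0 h1, right_ne_zero_of_mul hn⟩

lemma row_eq (n d : ℕ) (hn : n ≠ 0) (hd : d ∣ n) :
    ∑ k ∈ n.divisors, ramanujanSum d k = (rowA n d : ℂ) := by
  have key := (ArithmeticFunction.sum_eq_iff_sum_mul_moebius_eq
    (f := fun e => ∑ k ∈ n.divisors, ramanujanSum e k)
    (g := fun e => (e : ℂ) * ((n.divisors.filter (fun k => e ∣ k)).card : ℂ))).1 (by
      intro e he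
      rw [Finset.sum_comm, Finset.sum_congr rfl fun k _ => sum_ram e k he,
        ← Finset.sum_filter, Finset.sum_const, nsmul_eq_mul, mul_comm])
      d (Nat.pos_of_dvd_of_pos hd (Nat.pos_of_ne_zero hn))
  rw [← key, rowA]
  rw [Nat.sum_divisorsAntidiagonal' (f := fun x y => ((ArithmeticFunction.moebius x : ℤ) : ℂ) *
    ((y : ℂ) * ((n.divisors.filter (fun k => y ∣ k)).card : ℂ)))]
  push_cast
  refine Finset.sum_congr rfl fun e he => ?_
  rw [card_mult n e hn ((Nat.dvd_of_mem_divisors he).trans hd)]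

lemma rowA_mul (n₁ n₂ d₁ d₂ : ℕ) (h : Nat.Coprime n₁ n₂) (h1 : d₁ ∣ n₁) (h2 : d₂ ∣ n₂) :
    rowA (n₁ * n₂) (d₁ * d₂) = rowA n₁ d₁ * rowA n₂ d₂ := by
  have hd : Nat.Coprime d₁ d₂ := Nat.Coprime.of_dvd h1 h2 h
  unfold rowA
  rw [Finset.sum_mul_sum, ← Finset.sum_product']
  symm
  refine Finset.sum_bij (fun p _ => p.1 * p.2) ?_ ?_ ?_ ?_
  · rintro ⟨a, b⟩ hp
    simp only [Finset.mem_product, Nat.mem_divisors] at hp ⊢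
    exact ⟨mul_dvd_mul hp.1.1 hp.2.1, mul_ne_zero hp.1.2 hp.2.2⟩
  · intro a ha b hb hab
    exact hd.mul_injOn_divisors ha hb hab
  · intro b hb
    rw [Nat.mem_divisors] at hb
    obtain ⟨x, y, hx, hy, rfl⟩ := exists_dvd_and_dvd_of_dvd_mul hb.1
    refine ⟨(x, y), ?_, rfl⟩
    simp only [Finset.mem_product, Nat.mem_divisors]
    exact ⟨⟨hx, left_ne_zero_of_mul hb.2⟩, hy, right_ne_zero_of_mul hb.2⟩
  · rintro ⟨a, b⟩ hp
    simp only [Finset.mem_product, Nat.mem_divisors] at hp ⊢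
    obtain ⟨⟨ha, _⟩, hb, _⟩ := hp
    have e1 : d₁ * d₂ / (a * b) = (d₁ / a) * (d₂ / b) := Nat.mul_div_mul_comm ha hb
    have e2 : n₁ * n₂ / (a * b) = (n₁ / a) * (n₂ / b) :=
      Nat.mul_div_mul_comm (ha.trans h1) (hb.trans h2)
    have c1 : Nat.Coprime (d₁ / a) (d₂ / b) :=
      Nat.Coprime.of_dvd (Nat.div_dvd_of_dvd ha) (Nat.div_dvd_of_dvd hb) hd
    have c2 : Nat.Coprime (n₁ / a) (n₂ / b) :=
      Nat.Coprime.of_dvd (Nat.div_dvd_of_dvd (ha.trans h1)) (Nat.div_dvd_of_dvd (hb.trans h2)) h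
    rw [e1, e2, c2.card_divisors_mul,
      ArithmeticFunction.isMultiplicative_moebius.map_mul_of_coprime c1]
    push_cast
    ring

lemma rowA_one (n : ℕ) : rowA n 1 = (n.divisors.card : ℤ) := by
  simp [rowA]

lemma rowA_prime_pow (p b t : ℕ) (hp : p.Prime) :
    rowA (p ^ (b + 1 + t)) (p ^ (b + 1)) = (p : ℤ) ^ b * ((p - 1) * (t + 1) - 1) := by
  have hpp := hp.pos
  unfold rowA
  rw [Nat.divisors_prime_pow hp, Finset.sum_map, Finset.sum_range_succ, Finset.sum_range_succ,
    Finset.sum_eq_zero]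
  · simp only [Function.Embedding.coeFn_mk]
    rw [Nat.pow_div (by omega) hpp, Nat.pow_div (by omega) hpp, Nat.pow_div (by omega) hpp,
      Nat.pow_div (by omega) hpp, show b + 1 - b = 1 by omega, show b + 1 - (b + 1) = 0 by omega,
      show b + 1 + t - b = t + 1 by omega, show b + 1 + t - (b + 1) = t by omega,
      Nat.divisors_prime_pow hp, Nat.divisors_prime_pow hp, pow_one,
      ArithmeticFunction.moebius_apply_prime hp]
    simp
    ring
  · intro i hi
    rw [Finset.mem_range] at hi
    simp only [Function.Embedding.coeFn_mk]
    rw [Nat.pow_div (by omega) hpp, ArithmeticFunction.moebius_apply_prime_pow hp (by omega),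
      if_neg (by omega), zero_mul]

lemma rowA_main (n : ℕ) : n ≠ 0 → ∀ d, d ∣ n →
    0 ≤ rowA n d ∧ (rowA n d = 0 ↔ Even n ∧ Odd (n / d)) := by
  have hone : ∀ n : ℕ, n ≠ 0 → 0 ≤ rowA n 1 ∧ (rowA n 1 = 0 ↔ Even n ∧ Odd (n / 1)) := by
    intro n hn
    rw [rowA_one, Nat.div_one]
    refine ⟨by positivity, ?_⟩
    have h1 : n.divisors.card ≠ 0 := by simp [hn]
    constructor
    · intro h
      exact absurd (by exact_mod_cast h) h1
    · rintro ⟨h, h'⟩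
      exact absurd h (Nat.not_even_iff_odd.2 h')
  induction n using Nat.recOnPosPrimePosCoprime with
  | zero => intro h; exact absurd rfl h
  | one =>
    intro _ d hd
    rw [Nat.dvd_one.1 hd]
    exact hone 1 one_ne_zero
  | prime_pow p a hp ha =>
    intro hn d hd
    obtain ⟨b, hb, rfl⟩ := (Nat.dvd_prime_pow hp).1 hd
    rcases b with _ | b
    · exact hone _ hn
    · obtain ⟨t, rfl⟩ := Nat.exists_eq_add_of_le hb
      rw [rowA_prime_pow p b t hp, Nat.pow_div (by omega) hp.pos,
        show b + 1 + t - (b + 1) = t by omega]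
      have hpb : (0 : ℤ) < (p : ℤ) ^ b := by have := hp.pos; positivity
      have h2 : (2 : ℤ) ≤ p := by exact_mod_cast hp.two_le
      have ht : (0 : ℤ) ≤ t := by positivity
      refine ⟨mul_nonneg hpb.le (by nlinarith), ?_⟩
      rw [mul_eq_zero, or_iff_right hpb.ne']
      constructor
      · intro h
        have ht0 : (t : ℤ) = 0 := by nlinarith
        have hp2 : (p : ℤ) = 2 := by rw [ht0] at h; linarith
        have ht0' : t = 0 := by exact_mod_cast ht0
        have hp2' : p = 2 := by exact_mod_cast hp2
        subst ht0' hp2'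
        simp [Nat.even_pow]
      · rintro ⟨h, h'⟩
        have hpe : Even p := (Nat.even_pow.1 h).1
        have hp2 : p = 2 := hp.even_iff.1 hpe
        have ht0 : t = 0 := by
          by_contra h0
          exact absurd (Nat.even_pow.2 ⟨hpe, h0⟩) (Nat.not_even_iff_odd.2 h')
        subst hp2 ht0
        norm_num
  | coprime x y hx hy hxy ihx ihy =>
    intro hn d hd
    obtain ⟨d₁, d₂, h1, h2, rfl⟩ := exists_dvd_and_dvd_of_dvd_mul hd
    obtain ⟨p1, q1⟩ := ihx (by omega) d₁ h1
    obtain ⟨p2, q2⟩ := ihy (by omega) d₂ h2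
    rw [rowA_mul x y d₁ d₂ hxy h1 h2, mul_eq_zero, q1, q2, Nat.mul_div_mul_comm h1 h2,
      Nat.odd_mul, Nat.even_mul]
    refine ⟨mul_nonneg p1 p2, ?_⟩
    have o1 : Odd x → Odd (x / d₁) := fun h => h.of_dvd_nat (Nat.div_dvd_of_dvd h1)
    have o2 : Odd y → Odd (y / d₂) := fun h => h.of_dvd_nat (Nat.div_dvd_of_dvd h2)
    have hne : ¬ (Even x ∧ Even y) := by
      rintro ⟨u, v⟩
      have := Nat.dvd_gcd u.two_dvd v.two_dvd
      rw [hxy] at this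
      omega
    constructor
    · rintro (⟨u, v⟩ | ⟨u, v⟩)
      · exact ⟨Or.inl u, v, o2 (Nat.not_even_iff_odd.1 fun w => hne ⟨u, w⟩)⟩
      · exact ⟨Or.inr u, o1 (Nat.not_even_iff_odd.1 fun w => hne ⟨w, u⟩), v⟩
    · rintro ⟨u | u, v, w⟩
      · exact Or.inl ⟨u, v⟩
      · exact Or.inr ⟨u, w⟩

theorem stmt_11 (n : ℕ) (hn : 1 ≤ n) (d : ℕ) (hd : d ∣ n) :
    (0 ≤ (∑ k ∈ n.divisors, ramanujanSum d k).re ∧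
      (∑ k ∈ n.divisors, ramanujanSum d k).im = 0) ∧
    ((∑ k ∈ n.divisors, ramanujanSum d k) = 0 ↔ Even n ∧ Odd (n / d)) := by
  obtain ⟨h1, h2⟩ := rowA_main n (by omega) d hd
  rw [row_eq n d (by omega) hd]
  refine ⟨⟨?_, ?_⟩, ?_⟩
  · rw [Complex.intCast_re]
    exact_mod_cast h1
  · exact Complex.intCast_im _
  · rw [Int.cast_eq_zero]
    exact h2
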